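/- Let 0 < p* < p ≤ 0.5, let h > 0, and let p′ ∈ [p*, 0.5] satisfy |p − p′| ≤ h/2 (p′ is the node of a grid with step h on [p*, 0.5] closest to p). Then for all integers n ≥ 1 and 0 ≤ k ≤ n, |Δ_{n,k}(p)/ρ(p) − Δ_{n,k}(p′)/ρ(p′)| ≤ (h/2) · L(p*), where L(p) = (1/((1 − 2pq)√(pq))) · (c₁/p + c₂ + c₃ · (1 − 2p)(1 + 2pq)/(1 − 2pq)) with c₁ = 0.516, c₂ = 0.121, c₃ = 0.271. -/

import Mathlib

/-- The standard normal distribution function Φ. -/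
noncomputable def Phi (x : ℝ) : ℝ :=
  (Real.sqrt (2 * Real.pi))⁻¹ * ∫ t in Set.Iio x, Real.exp (-t ^ 2 / 2)

/-- The left-continuous binomial distribution function
`F_{n,p}(x) = Σ_{0 ≤ i < x} C(n,i) p^i q^{n−i}`. -/
noncomputable def binomCDF (n : ℕ) (p x : ℝ) : ℝ :=
  ∑ i ∈ Finset.range (n + 1),
    if (i : ℝ) < x then (n.choose i : ℝ) * p ^ i * (1 - p) ^ (n - i) else 0

/-- `G_{n,p}(x) = Φ((x − np)/√(npq))`. -/
noncomputable def Gnp (n : ℕ) (p x : ℝ) : ℝ :=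
  Phi ((x - n * p) / Real.sqrt (n * p * (1 - p)))

/-- `Δ_{n,k}(p) = max{ |F_{n,p}(k) − G_{n,p}(k)|, |F_{n,p}(k+1) − G_{n,p}(k)| }`. -/
noncomputable def Deltank (n k : ℕ) (p : ℝ) : ℝ :=
  max |binomCDF n p k - Gnp n p k| |binomCDF n p (k + 1) - Gnp n p k|

/-- `ρ(p) = (p² + q²)/√(pq)`. -/
noncomputable def rho (p : ℝ) : ℝ :=
  (p ^ 2 + (1 - p) ^ 2) / Real.sqrt (p * (1 - p))

/-- `L(p) = (1/((1−2pq)√(pq))) (c₁/p + c₂ + c₃ (1−2p)(1+2pq)/(1−2pq))` with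
`c₁ = 0.516`, `c₂ = 0.121`, `c₃ = 0.271`. -/
noncomputable def L (p : ℝ) : ℝ :=
  (1 / ((1 - 2 * p * (1 - p)) * Real.sqrt (p * (1 - p)))) *
    (0.516 / p + 0.121 +
      0.271 * ((1 - 2 * p) * (1 + 2 * p * (1 - p)) / (1 - 2 * p * (1 - p))))

/-!
By the mean value inequality it suffices to bound, for `x ∈ [m - 1, m]`, the derivative in `p` of
`(F(m) - G(x)) / ρ` by `L p`, and to know that `L` is antitone on `(0, 1/2]`; the maximum defining
`Δ` is then controlled termwise, with `m = k` and `m = k + 1`.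

The derivative of `F(m)` telescopes to `-n` times a single mass of the binomial distribution with
parameters `n - 1` and `p`. Comparing characteristic functions on `[-π, π]` shows that
`pq ∂F(m)/∂p` is within `c₁ / p` of `-√(npq) φ(z)`, where `z` is the argument of `Φ` in `G`. The
latter is the main part of `pq ∂G/∂p`, and the rest, `-(1 - 2p) z φ(z) / 2`, is at most
`sup |z| φ(z) / 2 ≤ c₂`. Cantelli's inequality gives `|F(m) - G(x)| ≤ 2 c₃`, and this factor
multiplies the derivative of `1 / ρ`.
-/

open MeasureTheory ProbabilityTheory Real

section ElementaryBounds

lemma mul_one_sub_le_quarter (p : ℝ) : p * (1 - p) ≤ 1 / 4 := by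
  nlinarith [sq_nonneg (p - 1 / 2)]

lemma cos_le_one_sub_sq_add_pow_four (y : ℝ) : cos y ≤ 1 - y ^ 2 / 2 + y ^ 4 / 24 := by
  wlog hy : 0 ≤ y generalizing y
  · simpa [Even.neg_pow (by decide : Even 2), Even.neg_pow (by decide : Even 4)] using
      this (-y) (by linarith)
  have hderiv (t : ℝ) : HasDerivAt (fun t : ℝ => 1 - t ^ 2 / 2 + t ^ 4 / 24 - cos t)
      (sin t - (t - t ^ 3 / 6)) t := by
    refine (((((hasDerivAt_pow 2 t).div_const 2).const_sub 1).add
      ((hasDerivAt_pow 4 t).div_const 24)).sub (hasDerivAt_cos t)).congr_deriv ?_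
    norm_num
    ring
  have hmono : MonotoneOn (fun t : ℝ => 1 - t ^ 2 / 2 + t ^ 4 / 24 - cos t) (Set.Ici 0) := by
    refine monotoneOn_of_hasDerivWithinAt_nonneg (convex_Ici 0)
      (fun t _ => (hderiv t).continuousAt.continuousWithinAt)
      (fun t _ => (hderiv t).hasDerivWithinAt) fun t ht => ?_
    exact sub_nonneg.2 (sin_ge_sub_cube (interior_subset ht))
  simpa using hmono Set.self_mem_Ici hy hy

lemma exp_neg_le_one_sub_add_sq {z : ℝ} (hz : 0 ≤ z) : exp (-z) ≤ 1 - z + z ^ 2 / 2 := by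
  have hpos : 0 < 1 + z + z ^ 2 / 2 := by positivity
  calc exp (-z) = (exp z)⁻¹ := exp_neg z
    _ ≤ (1 + z + z ^ 2 / 2)⁻¹ := inv_anti₀ hpos (quadratic_le_exp_of_nonneg hz)
    _ ≤ 1 - z + z ^ 2 / 2 := by
      rw [inv_le_iff_one_le_mul₀ hpos]
      nlinarith [sq_nonneg (z ^ 2)]

lemma abs_cos_sub_cos_le_abs_sq_sub_sq (x y : ℝ) : |cos x - cos y| ≤ |x ^ 2 - y ^ 2| / 2 := by
  calc |cos x - cos y| = 2 * |sin ((x + y) / 2)| * |sin ((x - y) / 2)| := by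
        rw [cos_sub_cos, abs_mul, abs_mul, abs_neg, abs_two]
    _ ≤ 2 * |(x + y) / 2| * |(x - y) / 2| := by
        refine mul_le_mul (mul_le_mul_of_nonneg_left abs_sin_le_abs zero_le_two) abs_sin_le_abs
          (abs_nonneg _) (by positivity)
    _ = |x ^ 2 - y ^ 2| / 2 := by
        rw [sq_sub_sq, abs_mul, abs_div, abs_div, abs_two]
        ring

lemma abs_mul_sin_sub_mul_sin_le (a b t : ℝ) :
    |a * sin (b * t) - b * sin (a * t)| ≤ |a * b| * |b ^ 2 - a ^ 2| * |t| ^ 3 / 6 := by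
  wlog ht : 0 ≤ t generalizing t
  · have := this (-t) (by linarith)
    rwa [mul_neg, mul_neg, sin_neg, sin_neg, mul_neg, mul_neg, neg_sub_neg, abs_sub_comm,
      abs_neg] at this
  have hf (t : ℝ) : HasDerivAt (fun t => a * sin (b * t) - b * sin (a * t))
      (a * b * (cos (b * t) - cos (a * t))) t := by
    refine ((((hasDerivAt_id t).const_mul b).sin.const_mul a).sub
      (((hasDerivAt_id t).const_mul a).sin.const_mul b)).congr_deriv ?_
    simp only [id]
    ring
  have hB (t : ℝ) : HasDerivAt (fun t => |a * b| * |b ^ 2 - a ^ 2| * t ^ 3 / 6)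
      (|a * b| * (|b ^ 2 - a ^ 2| * t ^ 2 / 2)) t := by
    refine (((hasDerivAt_pow 3 t).const_mul (|a * b| * |b ^ 2 - a ^ 2|)).div_const 6).congr_deriv ?_
    norm_num
    ring
  have hbound (t : ℝ) : ‖a * b * (cos (b * t) - cos (a * t))‖ ≤
      |a * b| * (|b ^ 2 - a ^ 2| * t ^ 2 / 2) := by
    rw [norm_mul, norm_eq_abs, norm_eq_abs]
    gcongr
    refine (abs_cos_sub_cos_le_abs_sq_sub_sq _ _).trans_eq ?_
    rw [mul_pow, mul_pow, ← sub_mul, abs_mul, abs_sq]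
  rw [abs_of_nonneg ht]
  exact image_norm_le_of_norm_deriv_right_le_deriv_boundary
    (fun t _ => (hf t).continuousAt.continuousWithinAt) (fun t _ => (hf t).hasDerivWithinAt)
    (by simp) hB (fun t _ => hbound t) (Set.right_mem_Icc.2 ht)

lemma norm_pow_succ_sub_pow_succ_le {R : Type*} [SeminormedRing R] {x y : R} {b : ℝ}
    (hx : ‖x‖ ≤ b) (hy : ‖y‖ ≤ b) (n : ℕ) :
    ‖x ^ (n + 1) - y ^ (n + 1)‖ ≤ (n + 1) * ‖x - y‖ * b ^ n := by
  induction n with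
  | zero => simp
  | succ n ih =>
    have hb : 0 ≤ b := (norm_nonneg x).trans hx
    have hy' : ‖y ^ (n + 1)‖ ≤ b ^ (n + 1) :=
      (norm_pow_le' y n.succ_pos).trans (pow_le_pow_left₀ (norm_nonneg y) hy _)
    calc ‖x ^ (n + 1 + 1) - y ^ (n + 1 + 1)‖
        = ‖x * (x ^ (n + 1) - y ^ (n + 1)) + (x - y) * y ^ (n + 1)‖ := by
          rw [pow_succ' x, pow_succ' y]
          noncomm_ring
      _ ≤ ‖x‖ * ‖x ^ (n + 1) - y ^ (n + 1)‖ + ‖x - y‖ * ‖y ^ (n + 1)‖ :=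
          norm_add_le_of_le (norm_mul_le _ _) (norm_mul_le _ _)
      _ ≤ b * ((n + 1) * ‖x - y‖ * b ^ n) + ‖x - y‖ * b ^ (n + 1) := by gcongr
      _ = (↑(n + 1) + 1) * ‖x - y‖ * b ^ (n + 1) := by
          push_cast
          ring

lemma norm_exp_mul_I_sub_exp_mul_I_le (x y : ℝ) :
    ‖Complex.exp (x * Complex.I) - Complex.exp (y * Complex.I)‖ ≤ |x - y| := by
  have hfactor : Complex.exp (x * Complex.I) - Complex.exp (y * Complex.I) =
      Complex.exp (y * Complex.I) * (Complex.exp (Complex.I * (x - y : ℝ)) - 1) := by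
    rw [mul_sub, ← Complex.exp_add, mul_one]
    congr 2
    push_cast
    ring
  rw [hfactor, norm_mul, Complex.norm_exp_ofReal_mul_I, one_mul]
  exact norm_exp_I_mul_ofReal_sub_one_le

end ElementaryBounds

section CharacteristicFunction

/-- The characteristic function at `t` of `X - p`, where `X` is a Bernoulli variable with
parameter `p`. -/
noncomputable def bernoulliCharFun (p t : ℝ) : ℂ :=
  ((1 - p : ℝ) : ℂ) * Complex.exp ((-(p * t) : ℝ) * Complex.I) +
    (p : ℂ) * Complex.exp (((1 - p) * t : ℝ) * Complex.I)

/-- The constant `C` for which the characteristic function of a centred Bernoulli variable differs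
from `exp (-p (1 - p) t² / 2)` by at most `p (1 - p) C |t|³` on `[-π, π]`. -/
noncomputable def bernoulliErrorConst (p : ℝ) : ℝ :=
  |1 - 2 * p| / 6 + π * (1 - p * (1 - p)) / 24

lemma bernoulliErrorConst_nonneg (p : ℝ) : 0 ≤ bernoulliErrorConst p := by
  have : 0 ≤ 1 - p * (1 - p) := by linarith [mul_one_sub_le_quarter p]
  unfold bernoulliErrorConst
  positivity

@[fun_prop]
lemma continuous_bernoulliCharFun (p : ℝ) : Continuous (bernoulliCharFun p) := by
  unfold bernoulliCharFun
  fun_prop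

lemma bernoulliCharFun_re (p t : ℝ) :
    (bernoulliCharFun p t).re = (1 - p) * cos (p * t) + p * cos ((1 - p) * t) := by
  rw [bernoulliCharFun, Complex.add_re, Complex.re_ofReal_mul, Complex.re_ofReal_mul,
    Complex.exp_ofReal_mul_I_re, Complex.exp_ofReal_mul_I_re, cos_neg]

lemma bernoulliCharFun_im (p t : ℝ) :
    (bernoulliCharFun p t).im = p * sin ((1 - p) * t) - (1 - p) * sin (p * t) := by
  rw [bernoulliCharFun, Complex.add_im, Complex.im_ofReal_mul, Complex.im_ofReal_mul,
    Complex.exp_ofReal_mul_I_im, Complex.exp_ofReal_mul_I_im, sin_neg]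
  ring

lemma norm_bernoulliCharFun_sq (p t : ℝ) :
    ‖bernoulliCharFun p t‖ ^ 2 = 1 - 2 * (p * (1 - p)) * (1 - cos t) := by
  have hcos : cos t = cos (p * t) * cos ((1 - p) * t) - sin (p * t) * sin ((1 - p) * t) := by
    rw [← cos_add]
    ring_nf
  rw [Complex.sq_norm, Complex.normSq_apply, bernoulliCharFun_re, bernoulliCharFun_im, hcos]
  linear_combination (1 - p) ^ 2 * sin_sq_add_cos_sq (p * t) +
    p ^ 2 * sin_sq_add_cos_sq ((1 - p) * t)

variable {p t : ℝ}

lemma norm_bernoulliCharFun_le (hp₀ : 0 ≤ p) (hp₁ : p ≤ 1) (ht : |t| ≤ π) :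
    ‖bernoulliCharFun p t‖ ≤ exp (-(2 * (p * (1 - p)) / π ^ 2 * t ^ 2)) := by
  refine le_of_sq_le_sq ?_ (exp_pos _).le
  calc ‖bernoulliCharFun p t‖ ^ 2 = 1 - 2 * (p * (1 - p)) * (1 - cos t) :=
        norm_bernoulliCharFun_sq p t
    _ ≤ 1 - 2 * (p * (1 - p)) * (2 / π ^ 2 * t ^ 2) := by
        gcongr
        linarith [cos_le_one_sub_mul_cos_sq ht]
    _ ≤ exp (-(2 * (p * (1 - p)) * (2 / π ^ 2 * t ^ 2))) := one_sub_le_exp_neg _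
    _ = exp (-(2 * (p * (1 - p)) / π ^ 2 * t ^ 2)) ^ 2 := by
        rw [← exp_nat_mul]
        push_cast
        ring_nf

lemma abs_re_bernoulliCharFun_sub_exp_le (hp₀ : 0 ≤ p) (hp₁ : p ≤ 1) (t : ℝ) :
    |(bernoulliCharFun p t).re - exp (-(p * (1 - p) * t ^ 2 / 2))| ≤
      p * (1 - p) * (1 - p * (1 - p)) * t ^ 4 / 24 := by
  have hcos_le : (bernoulliCharFun p t).re ≤
      1 - p * (1 - p) * t ^ 2 / 2 + p * (1 - p) * (1 - 3 * (p * (1 - p))) * t ^ 4 / 24 := by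
    rw [bernoulliCharFun_re]
    linear_combination (1 - p) * cos_le_one_sub_sq_add_pow_four (p * t) +
      p * cos_le_one_sub_sq_add_pow_four ((1 - p) * t)
  have hle_cos : 1 - p * (1 - p) * t ^ 2 / 2 ≤ (bernoulliCharFun p t).re := by
    rw [bernoulliCharFun_re]
    linear_combination (1 - p) * one_sub_sq_div_two_le_cos (x := p * t) +
      p * one_sub_sq_div_two_le_cos (x := (1 - p) * t)
  have hexp_le := exp_neg_le_one_sub_add_sq (z := p * (1 - p) * t ^ 2 / 2) (by positivity)
  have hle_exp := one_sub_le_exp_neg (p * (1 - p) * t ^ 2 / 2)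
  rw [abs_le]
  constructor
  · linear_combination hle_cos + hexp_le + p * (1 - p) * t ^ 4 / 6 * mul_one_sub_le_quarter p
  · have : 0 ≤ p * (1 - p) * (p * (1 - p) * t ^ 4) := by positivity
    linear_combination hcos_le + hle_exp + this / 12

lemma norm_bernoulliCharFun_sub_exp_le (hp₀ : 0 ≤ p) (hp₁ : p ≤ 1) (ht : |t| ≤ π) :
    ‖bernoulliCharFun p t - (exp (-(p * (1 - p) * t ^ 2 / 2)) : ℝ)‖ ≤
      p * (1 - p) * bernoulliErrorConst p * |t| ^ 3 := by
  have hv : 0 ≤ p * (1 - p) := mul_nonneg hp₀ (by linarith)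
  have hv' : 0 ≤ 1 - p * (1 - p) := by linarith [mul_one_sub_le_quarter p]
  have hre := abs_re_bernoulliCharFun_sub_exp_le hp₀ hp₁ t
  have him : |(bernoulliCharFun p t).im| ≤ p * (1 - p) * |1 - 2 * p| * |t| ^ 3 / 6 := by
    rw [bernoulliCharFun_im]
    refine (abs_mul_sin_sub_mul_sin_le p (1 - p) t).trans_eq ?_
    rw [abs_of_nonneg hv]
    ring_nf
  have ht4 : t ^ 4 ≤ π * |t| ^ 3 := by
    rw [← Even.pow_abs (by decide : Even 4) t, pow_succ' _ 3]
    gcongr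
  calc _ ≤ |(bernoulliCharFun p t).re - exp (-(p * (1 - p) * t ^ 2 / 2))| +
        |(bernoulliCharFun p t).im| := by
        refine (Complex.norm_le_abs_re_add_abs_im _).trans_eq ?_
        rw [Complex.sub_re, Complex.sub_im, Complex.ofReal_re, Complex.ofReal_im, sub_zero]
    _ ≤ p * (1 - p) * (1 - p * (1 - p)) * (π * |t| ^ 3) / 24 +
        p * (1 - p) * |1 - 2 * p| * |t| ^ 3 / 6 := by
        refine add_le_add (hre.trans ?_) him
        gcongr
    _ = p * (1 - p) * bernoulliErrorConst p * |t| ^ 3 := by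
        rw [bernoulliErrorConst]
        ring

lemma norm_exp_sub_bernoulliCharFun_le {s : ℝ} (hs : s ∈ Set.Icc (0 : ℝ) 1) (hp₀ : 0 ≤ p)
    (hp₁ : p ≤ 1 / 2) (t : ℝ) :
    ‖Complex.exp (((s - p) * t : ℝ) * Complex.I) - bernoulliCharFun p t‖ ≤ (1 - p) * |t| := by
  have hq : 0 ≤ 1 - p := by linarith
  have hsplit : Complex.exp (((s - p) * t : ℝ) * Complex.I) - bernoulliCharFun p t =
      ((1 - p : ℝ) : ℂ) * (Complex.exp (((s - p) * t : ℝ) * Complex.I) -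
        Complex.exp ((-(p * t) : ℝ) * Complex.I)) +
      (p : ℂ) * (Complex.exp (((s - p) * t : ℝ) * Complex.I) -
        Complex.exp (((1 - p) * t : ℝ) * Complex.I)) := by
    rw [bernoulliCharFun]
    push_cast
    ring
  calc _ ≤ (1 - p) * |(s - p) * t - -(p * t)| + p * |(s - p) * t - (1 - p) * t| := by
        rw [hsplit]
        refine norm_add_le_of_le ?_ ?_
        · rw [norm_mul, Complex.norm_of_nonneg hq]
          gcongr
          exact norm_exp_mul_I_sub_exp_mul_I_le _ _
        · rw [norm_mul, Complex.norm_of_nonneg hp₀]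
          gcongr
          exact norm_exp_mul_I_sub_exp_mul_I_le _ _
    _ = ((1 - p) * s + p * (1 - s)) * |t| := by
        rw [show (s - p) * t - -(p * t) = s * t by ring,
          show (s - p) * t - (1 - p) * t = -((1 - s) * t) by ring, abs_neg, abs_mul, abs_mul,
          abs_of_nonneg hs.1, abs_of_nonneg (sub_nonneg.2 hs.2)]
        ring
    _ ≤ (1 - p) * |t| := by
        gcongr
        nlinarith [hs.2]

end CharacteristicFunction

section BinomialDistribution

variable {p : ℝ}

/-- The probability that a binomial variable with parameters `n` and `p` equals `j`. -/
noncomputable def binomMass (n : ℕ) (p : ℝ) (j : ℕ) : ℝ :=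
  n.choose j * p ^ j * (1 - p) ^ (n - j)

/-- The variance of the binomial distribution with parameters `n` and `p`. -/
noncomputable def binomVar (n : ℕ) (p : ℝ) : ℝ :=
  n * p * (1 - p)

/-- The value `x` of a binomial variable with parameters `n` and `p`, centred and divided by the
standard deviation. -/
noncomputable def binomStd (n : ℕ) (p x : ℝ) : ℝ :=
  (x - n * p) / √(binomVar n p)

lemma binomVar_nonneg (hp₀ : 0 ≤ p) (hp₁ : p ≤ 1) (n : ℕ) : 0 ≤ binomVar n p := by
  have : 0 ≤ 1 - p := sub_nonneg.2 hp₁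
  unfold binomVar
  positivity

lemma binomVar_pos (hp₀ : 0 < p) (hp₁ : p < 1) {n : ℕ} (hn : 0 < n) : 0 < binomVar n p := by
  have : 0 < 1 - p := sub_pos.2 hp₁
  unfold binomVar
  positivity

lemma binomMass_eq_eval (n : ℕ) (p : ℝ) (j : ℕ) :
    binomMass n p j = (bernsteinPolynomial ℝ n j).eval p := by
  simp [binomMass, bernsteinPolynomial]

lemma binomMass_nonneg (hp₀ : 0 ≤ p) (hp₁ : p ≤ 1) (n j : ℕ) : 0 ≤ binomMass n p j := by
  have : 0 ≤ 1 - p := sub_nonneg.2 hp₁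
  unfold binomMass
  positivity

lemma binomMass_eq_zero {n j : ℕ} (h : n < j) (p : ℝ) : binomMass n p j = 0 := by
  simp [binomMass, Nat.choose_eq_zero_of_lt h]

lemma sum_range_binomMass (n : ℕ) (p : ℝ) : ∑ i ∈ Finset.range (n + 1), binomMass n p i = 1 := by
  simp_rw [binomMass_eq_eval]
  rw [← Polynomial.eval_finsetSum, bernsteinPolynomial.sum, Polynomial.eval_one]

lemma sum_binomMass_le_one (hp₀ : 0 ≤ p) (hp₁ : p ≤ 1) (n : ℕ) (s : Finset ℕ) :
    ∑ i ∈ s, binomMass n p i ≤ 1 := by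
  calc ∑ i ∈ s, binomMass n p i ≤ ∑ i ∈ s ∪ Finset.range (n + 1), binomMass n p i :=
        Finset.sum_le_sum_of_subset_of_nonneg Finset.subset_union_left
          fun i _ _ => binomMass_nonneg hp₀ hp₁ n i
    _ = ∑ i ∈ Finset.range (n + 1), binomMass n p i :=
        (Finset.sum_subset Finset.subset_union_right
          fun i _ hi => binomMass_eq_zero (by simpa using hi) p).symm
    _ = 1 := sum_range_binomMass n p

lemma binomMass_le_one (hp₀ : 0 ≤ p) (hp₁ : p ≤ 1) (n j : ℕ) : binomMass n p j ≤ 1 := by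
  simpa using sum_binomMass_le_one hp₀ hp₁ n {j}

lemma binomMass_succ_succ (n : ℕ) (p : ℝ) (j : ℕ) :
    binomMass (n + 1) p (j + 1) = p * binomMass n p j + (1 - p) * binomMass n p (j + 1) := by
  rcases lt_or_ge j n with h | h
  · obtain ⟨m, rfl⟩ := Nat.exists_eq_add_of_lt h
    rw [binomMass, binomMass, binomMass, Nat.choose_succ_succ,
      show j + m + 1 + 1 - (j + 1) = m + 1 by lia, show j + m + 1 - j = m + 1 by lia,
      show j + m + 1 - (j + 1) = m by lia]
    push_cast
    ring
  · rw [binomMass_eq_zero (by lia : n < j + 1), binomMass, binomMass, Nat.choose_succ_succ,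
      Nat.choose_eq_zero_of_lt (by lia : n < j + 1), Nat.add_sub_add_right]
    push_cast
    ring

lemma binomMass_succ_le (hp₀ : 0 ≤ p) (hp₁ : p ≤ 1 / 2) (n j : ℕ) :
    binomMass (n + 1) p j ≤ 1 - p := by
  have hq : 0 ≤ 1 - p := by linarith
  cases j with
  | zero =>
    have hpow : (1 - p) ^ n ≤ 1 := pow_le_one₀ hq (by linarith)
    simpa [binomMass, pow_succ] using mul_le_mul_of_nonneg_right hpow hq
  | succ j =>
    have hnonneg := binomMass_nonneg hp₀ (by linarith) n j
    have hpair : binomMass n p j + binomMass n p (j + 1) ≤ 1 := by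
      simpa using sum_binomMass_le_one hp₀ (by linarith) n {j, j + 1}
    calc binomMass (n + 1) p (j + 1) = p * binomMass n p j + (1 - p) * binomMass n p (j + 1) :=
          binomMass_succ_succ n p j
      _ ≤ (1 - p) * binomMass n p j + (1 - p) * binomMass n p (j + 1) := by
          gcongr
          linarith
      _ ≤ 1 - p := by
          rw [← mul_add]
          exact mul_le_of_le_one_right hq hpair

end BinomialDistribution

section FourierInversion

lemma integral_exp_int_mul_I (m : ℤ) :
    ∫ t in (-π)..π, Complex.exp ((m : ℂ) * Complex.I * t) =
      if m = 0 then ((2 * π : ℝ) : ℂ) else 0 := by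
  split_ifs with h
  · subst h
    simp
    ring
  · have hperiodic : Complex.exp ((m : ℂ) * Complex.I * (π : ℝ)) =
        Complex.exp ((m : ℂ) * Complex.I * (-π : ℝ)) := by
      rw [Complex.exp_eq_exp_iff_exists_int]
      exact ⟨m, by push_cast; ring⟩
    rw [integral_exp_mul_complex (by simpa using h), hperiodic, sub_self, zero_div]

lemma exp_mul_bernoulliCharFun_pow_eq_sum (p : ℝ) (N j : ℕ) (t : ℝ) :
    Complex.exp (((N * p - j) * t : ℝ) * Complex.I) * bernoulliCharFun p t ^ N =
      ∑ m ∈ Finset.range (N + 1),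
        (binomMass N p m : ℂ) * Complex.exp (((m - j : ℤ) : ℂ) * Complex.I * t) := by
  have hfactor : bernoulliCharFun p t = Complex.exp ((-(p * t) : ℝ) * Complex.I) *
      ((p : ℂ) * Complex.exp (t * Complex.I) + ((1 - p : ℝ) : ℂ)) := by
    rw [bernoulliCharFun, mul_add, mul_left_comm, ← Complex.exp_add, add_comm,
      mul_comm (_ : ℂ) (Complex.exp ((-(p * t) : ℝ) * Complex.I))]
    congr 4
    push_cast
    ring
  rw [hfactor, mul_pow, add_pow, Finset.mul_sum, Finset.mul_sum]
  refine Finset.sum_congr rfl fun m _ => ?_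
  have hexp : Complex.exp (((m - j : ℤ) : ℂ) * Complex.I * t) =
      Complex.exp (((N * p - j) * t : ℝ) * Complex.I) *
        (Complex.exp ((-(p * t) : ℝ) * Complex.I) ^ N * Complex.exp (t * Complex.I) ^ m) := by
    rw [← Complex.exp_nat_mul, ← Complex.exp_nat_mul, ← Complex.exp_add, ← Complex.exp_add]
    congr 1
    push_cast
    ring
  rw [hexp, mul_pow, binomMass]
  push_cast
  ring

lemma integral_exp_mul_bernoulliCharFun_pow (p : ℝ) (N j : ℕ) :
    ∫ t in (-π)..π,
      Complex.exp (((N * p - j) * t : ℝ) * Complex.I) * bernoulliCharFun p t ^ N =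
      ((2 * π * binomMass N p j : ℝ) : ℂ) := by
  simp_rw [exp_mul_bernoulliCharFun_pow_eq_sum]
  rw [intervalIntegral.integral_finsetSum
    fun m _ => (by fun_prop : Continuous _).intervalIntegrable _ _]
  simp_rw [intervalIntegral.integral_const_mul, integral_exp_int_mul_I, sub_eq_zero,
    Nat.cast_inj, mul_ite, mul_zero]
  rw [Finset.sum_ite_eq', ite_eq_left_iff.2]
  · push_cast
    ring
  · intro hj
    rw [binomMass_eq_zero (by simpa using hj), Complex.ofReal_zero, zero_mul]

end FourierInversion

local notation "φ" => gaussianPDFReal 0 1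

section GaussianIntegrals

lemma gaussianPDFReal_zero_one (x : ℝ) : φ x = (√(2 * π))⁻¹ * exp (-x ^ 2 / 2) := by
  simp [gaussianPDFReal]

lemma integral_abs_pow_mul_exp_neg_mul_sq {a : ℝ} (ha : 0 < a) (k : ℕ) :
    ∫ t : ℝ, |t| ^ (2 * k + 1) * exp (-a * t ^ 2) = k.factorial / a ^ (k + 1) := by
  have hexponent : ((2 * k + 1 : ℕ) + 1 : ℝ) / 2 = (k + 1 : ℕ) := by
    push_cast
    ring
  calc ∫ t : ℝ, |t| ^ (2 * k + 1) * exp (-a * t ^ 2)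
      = ∫ t : ℝ, |t| ^ (2 * k + 1) * exp (-a * |t| ^ 2) := by simp_rw [sq_abs]
    _ = 2 * ∫ t in Set.Ioi (0 : ℝ), t ^ (2 * k + 1) * exp (-a * t ^ 2) :=
        integral_comp_abs (f := fun t => t ^ (2 * k + 1) * exp (-a * t ^ 2))
    _ = 2 * ∫ t in Set.Ioi (0 : ℝ), t ^ ((2 * k + 1 : ℕ) : ℝ) * exp (-a * t ^ (2 : ℝ)) := by
        simp_rw [rpow_natCast, rpow_two]
    _ = k.factorial / a ^ (k + 1) := by
        have hk : (-1 : ℝ) < (2 * k + 1 : ℕ) := neg_one_lt_zero.trans_le (Nat.cast_nonneg _)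
        rw [integral_rpow_mul_exp_neg_mul_rpow two_pos hk ha, neg_div, hexponent,
          rpow_neg ha.le, rpow_natCast, Nat.cast_succ, Gamma_nat_eq_factorial]
        field_simp

lemma integrable_abs_pow_mul_exp_neg_mul_sq {a : ℝ} (ha : 0 < a) (k : ℕ) :
    Integrable fun t : ℝ => |t| ^ (2 * k + 1) * exp (-a * t ^ 2) :=
  .of_integral_ne_zero (by rw [integral_abs_pow_mul_exp_neg_mul_sq ha]; positivity)

lemma setIntegral_Ioi_exp_neg_mul_sq_le {c T : ℝ} (hc : 0 < c) (hT : 0 < T) :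
    ∫ t in Set.Ioi T, exp (-c * t ^ 2) ≤ exp (-c * T ^ 2) / (c * T) := by
  have hcT : -(c * T) < 0 := neg_lt_zero.2 (mul_pos hc hT)
  calc ∫ t in Set.Ioi T, exp (-c * t ^ 2) ≤ ∫ t in Set.Ioi T, exp (-(c * T) * t) := by
        refine setIntegral_mono_on (integrable_exp_neg_mul_sq hc).integrableOn
          (integrableOn_exp_mul_Ioi hcT T) measurableSet_Ioi fun t ht => exp_le_exp.2 ?_
        have ht' : T ≤ t := (Set.mem_Ioi.1 ht).le
        nlinarith [mul_nonneg (mul_nonneg hc.le (hT.le.trans ht')) (sub_nonneg.2 ht')]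
    _ = exp (-c * T ^ 2) / (c * T) := by
        rw [integral_exp_mul_Ioi hcT, neg_div_neg_eq]
        ring_nf

lemma norm_integral_sub_intervalIntegral_le {E : Type*} [NormedAddCommGroup E] [NormedSpace ℝ E]
    {f : ℝ → E} (hf : AEStronglyMeasurable f) {c T : ℝ} (hc : 0 < c) (hT : 0 < T)
    (hfc : ∀ t, ‖f t‖ ≤ exp (-c * t ^ 2)) :
    ‖(∫ t, f t) - ∫ t in (-T)..T, f t‖ ≤ 2 * (exp (-c * T ^ 2) / (c * T)) := by
  have hexp := integrable_exp_neg_mul_sq hc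
  have hint : Integrable f := hexp.mono' hf (.of_forall hfc)
  have hsplit : (∫ t, f t) - ∫ t in (-T)..T, f t =
      (∫ t in Set.Iic (-T), f t) + ∫ t in Set.Ioi T, f t := by
    rw [← intervalIntegral.integral_Iic_sub_Iic hint.integrableOn hint.integrableOn,
      ← intervalIntegral.integral_Iic_add_Ioi (b := T) hint.integrableOn hint.integrableOn]
    abel
  have hleft : ∫ t in Set.Iic (-T), exp (-c * t ^ 2) = ∫ t in Set.Ioi T, exp (-c * t ^ 2) := by
    rw [← neg_neg T, ← integral_comp_neg_Iic, neg_neg]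
    simp_rw [neg_sq]
  calc _ ≤ (∫ t in Set.Iic (-T), exp (-c * t ^ 2)) + ∫ t in Set.Ioi T, exp (-c * t ^ 2) := by
        rw [hsplit]
        exact norm_add_le_of_le
          (norm_integral_le_of_norm_le hexp.integrableOn (.of_forall hfc))
          (norm_integral_le_of_norm_le hexp.integrableOn (.of_forall hfc))
    _ ≤ 2 * (exp (-c * T ^ 2) / (c * T)) := by
        rw [hleft, ← two_mul]
        gcongr
        exact setIntegral_Ioi_exp_neg_mul_sq_le hc hT

lemma integral_exp_mul_I_mul_exp_neg_mul_sq {V : ℝ} (hV : 0 < V) (y : ℝ) :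
    ∫ t : ℝ, Complex.exp ((-y * t : ℝ) * Complex.I) * (exp (-(V / 2) * t ^ 2) : ℝ) =
      ((2 * π * (φ (y / √V) / √V) : ℝ) : ℂ) := by
  have hfourier := fourierIntegral_gaussian (b := ((V / 2 : ℝ) : ℂ))
    (by rw [Complex.ofReal_re]; positivity) ((-y : ℝ) : ℂ)
  have hsqrt : (π / (V / 2)) ^ (1 / 2 : ℝ) = 2 * π * ((√(2 * π))⁻¹ / √V) := by
    rw [← sqrt_eq_rpow, show π / (V / 2) = 2 * π / V by field_simp, sqrt_div (by positivity)]
    nth_rw 2 [← sq_sqrt (show 0 ≤ 2 * π by positivity)]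
    field_simp
  have hexp : -(y / √V) ^ 2 / 2 = -(-y) ^ 2 / (4 * (V / 2)) := by
    rw [div_pow, sq_sqrt hV.le]
    field_simp
    norm_num
  convert! hfourier using 1
  · congr 1
    ext t
    push_cast
    congr 2
    ring
  · rw [gaussianPDFReal_zero_one, hexp, mul_div_right_comm, ← mul_assoc, ← hsqrt,
      Complex.ofReal_mul, Complex.ofReal_cpow (by positivity)]
    push_cast
    rfl

lemma gaussianPDFReal_zero_one_le (x : ℝ) : φ x ≤ 0.399 := by
  have hsqrt : (0.399 : ℝ)⁻¹ ≤ √(2 * π) := by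
    apply le_sqrt_of_sq_le
    linarith [pi_gt_d4, show ((0.399 : ℝ)⁻¹) ^ 2 ≤ 2 * 3.1415 by norm_num]
  have hexp : exp (-x ^ 2 / 2) ≤ 1 := exp_le_one_iff.2 (by linarith [sq_nonneg x])
  calc φ x = (√(2 * π))⁻¹ * exp (-x ^ 2 / 2) := gaussianPDFReal_zero_one x
    _ ≤ (√(2 * π))⁻¹ := mul_le_of_le_one_right (by positivity) hexp
    _ ≤ 0.399 := inv_le_of_inv_le₀ (by norm_num) hsqrt

lemma abs_mul_gaussianPDFReal_zero_one_le (x : ℝ) : |x| * φ x ≤ 0.242 := by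
  have hexp : x ^ 2 * exp (-x ^ 2) ≤ (2.7182818283)⁻¹ := by
    calc x ^ 2 * exp (-x ^ 2) ≤ exp (-1) := mul_exp_neg_le_exp_neg_one _
      _ = (exp 1)⁻¹ := exp_neg 1
      _ ≤ (2.7182818283)⁻¹ := inv_anti₀ (by norm_num) exp_one_gt_d9.le
  refine le_of_pow_le_pow_left₀ two_ne_zero (by norm_num) ?_
  calc (|x| * φ x) ^ 2 = (2 * π)⁻¹ * (x ^ 2 * exp (-x ^ 2)) := by
        rw [gaussianPDFReal_zero_one, mul_pow, mul_pow, sq_abs, inv_pow, sq_sqrt (by positivity),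
          ← exp_nat_mul]
        ring_nf
    _ ≤ (2 * 3.1415)⁻¹ * (2.7182818283)⁻¹ := by
        gcongr
        exact pi_gt_d4.le
    _ ≤ 0.242 ^ 2 := by norm_num

end GaussianIntegrals

section LocalLimitTheorem

variable {p : ℝ}

lemma norm_exp_mul_bernoulliCharFun_pow_sub_exp_le {s t : ℝ} (hp₀ : 0 ≤ p) (hp₁ : p ≤ 1 / 2)
    (hs : s ∈ Set.Icc (0 : ℝ) 1) (ht : |t| ≤ π) (N : ℕ) :
    ‖Complex.exp (((s - p) * t : ℝ) * Complex.I) * bernoulliCharFun p t ^ N -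
        (exp (-(binomVar (N + 1) p / 2) * t ^ 2) : ℝ)‖ ≤
      ((1 - p) * |t| + binomVar (N + 1) p * bernoulliErrorConst p * |t| ^ 3) *
        exp (-(2 * binomVar N p / π ^ 2) * t ^ 2) := by
  have hp₁' : p ≤ 1 := by linarith
  have hv : 0 ≤ p * (1 - p) := mul_nonneg hp₀ (by linarith)
  set w := bernoulliCharFun p t
  set b := exp (-(2 * (p * (1 - p)) / π ^ 2 * t ^ 2)) with hb
  set g := exp (-(p * (1 - p) * t ^ 2 / 2)) with hg
  have hbN : exp (-(2 * binomVar N p / π ^ 2) * t ^ 2) = b ^ N := by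
    rw [hb, ← exp_nat_mul, binomVar]
    ring_nf
  have hgN : exp (-(binomVar (N + 1) p / 2) * t ^ 2) = g ^ (N + 1) := by
    rw [hg, ← exp_nat_mul, binomVar]
    ring_nf
  have hwb : ‖w‖ ≤ b := norm_bernoulliCharFun_le hp₀ hp₁' ht
  have hgb : ‖(g : ℂ)‖ ≤ b := by
    have hpi : 2 / π ^ 2 ≤ 1 / 2 := by
      rw [div_le_div_iff₀ (by positivity) two_pos]
      nlinarith [two_le_pi]
    rw [Complex.norm_of_nonneg (exp_pos _).le, exp_le_exp, neg_le_neg_iff]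
    linear_combination mul_le_mul_of_nonneg_left hpi (mul_nonneg hv (sq_nonneg t))
  have hsplit : Complex.exp (((s - p) * t : ℝ) * Complex.I) * w ^ N - ((g ^ (N + 1) : ℝ) : ℂ) =
      (Complex.exp (((s - p) * t : ℝ) * Complex.I) - w) * w ^ N +
        (w ^ (N + 1) - (g : ℂ) ^ (N + 1)) := by
    push_cast
    ring
  rw [hbN, hgN, hsplit]
  calc _ ≤ (1 - p) * |t| * b ^ N + (N + 1) * ‖w - g‖ * b ^ N := by
        refine norm_add_le_of_le ?_ (norm_pow_succ_sub_pow_succ_le hwb hgb N)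
        rw [norm_mul, norm_pow]
        gcongr
        exact norm_exp_sub_bernoulliCharFun_le hs hp₀ hp₁ t
    _ ≤ (1 - p) * |t| * b ^ N +
        (N + 1) * (p * (1 - p) * bernoulliErrorConst p * |t| ^ 3) * b ^ N := by
        gcongr
        exact norm_bernoulliCharFun_sub_exp_le hp₀ hp₁' ht
    _ = _ := by
        rw [binomVar]
        push_cast
        ring

lemma norm_exp_mul_bernoulliCharFun_pow_sub_exp_mul_exp_le {x t : ℝ} (hp₀ : 0 ≤ p)
    (hp₁ : p ≤ 1 / 2) (ht : |t| ≤ π) (N : ℕ) {j : ℕ} (hx : x ∈ Set.Icc (j : ℝ) (j + 1)) :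
    ‖Complex.exp (((N * p - j) * t : ℝ) * Complex.I) * bernoulliCharFun p t ^ N -
        Complex.exp ((-(x - (N + 1 : ℕ) * p) * t : ℝ) * Complex.I) *
          (exp (-(binomVar (N + 1) p / 2) * t ^ 2) : ℝ)‖ ≤
      ((1 - p) * |t| + binomVar (N + 1) p * bernoulliErrorConst p * |t| ^ 3) *
        exp (-(2 * binomVar N p / π ^ 2) * t ^ 2) := by
  have hexp : Complex.exp (((N * p - j) * t : ℝ) * Complex.I) =
      Complex.exp ((-(x - (N + 1 : ℕ) * p) * t : ℝ) * Complex.I) *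
        Complex.exp (((x - j - p) * t : ℝ) * Complex.I) := by
    rw [← Complex.exp_add]
    push_cast
    ring_nf
  rw [hexp, mul_assoc, ← mul_sub, norm_mul, Complex.norm_exp_ofReal_mul_I, one_mul]
  exact norm_exp_mul_bernoulliCharFun_pow_sub_exp_le hp₀ hp₁
    ⟨sub_nonneg.2 hx.1, sub_le_iff_le_add'.2 hx.2⟩ ht N

lemma intervalIntegral_abs_pow_mul_exp_neg_mul_sq_le {a : ℝ} (ha : 0 < a) (k : ℕ) {T : ℝ}
    (hT : 0 ≤ T) :
    ∫ t in (-T)..T, |t| ^ (2 * k + 1) * exp (-a * t ^ 2) ≤ k.factorial / a ^ (k + 1) := by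
  rw [intervalIntegral.integral_of_le (by linarith), ← integral_abs_pow_mul_exp_neg_mul_sq ha]
  exact setIntegral_le_integral (integrable_abs_pow_mul_exp_neg_mul_sq ha k)
    (.of_forall fun t => by positivity)

lemma norm_intervalIntegral_exp_mul_sub_le {x : ℝ} (hp₀ : 0 < p) (hp₁ : p ≤ 1 / 2) {N : ℕ}
    (hN : 0 < N) {j : ℕ} (hx : x ∈ Set.Icc (j : ℝ) (j + 1)) :
    ‖(∫ t in (-π)..π,
        Complex.exp (((N * p - j) * t : ℝ) * Complex.I) * bernoulliCharFun p t ^ N) -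
      ∫ t in (-π)..π, Complex.exp ((-(x - (N + 1 : ℕ) * p) * t : ℝ) * Complex.I) *
        (exp (-(binomVar (N + 1) p / 2) * t ^ 2) : ℝ)‖ ≤
      (1 - p) / (2 * binomVar N p / π ^ 2) +
        binomVar (N + 1) p * bernoulliErrorConst p / (2 * binomVar N p / π ^ 2) ^ 2 := by
  have hV : 0 < binomVar N p := binomVar_pos hp₀ (by linarith) hN
  set a := 2 * binomVar N p / π ^ 2
  have ha₀ : 0 < a := by positivity
  set C := binomVar (N + 1) p * bernoulliErrorConst p
  have hC₀ : 0 ≤ C :=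
    mul_nonneg (binomVar_nonneg hp₀.le (by linarith) _) (bernoulliErrorConst_nonneg p)
  rw [← intervalIntegral.integral_sub ((by fun_prop : Continuous _).intervalIntegrable _ _)
    ((by fun_prop : Continuous _).intervalIntegrable _ _)]
  calc _ ≤ ∫ t in (-π)..π, ((1 - p) * (|t| ^ (2 * 0 + 1) * exp (-a * t ^ 2)) +
        C * (|t| ^ (2 * 1 + 1) * exp (-a * t ^ 2))) :=
        intervalIntegral.norm_integral_le_of_norm_le (by linarith [pi_pos])
          (.of_forall fun t ht => (norm_exp_mul_bernoulliCharFun_pow_sub_exp_mul_exp_le hp₀.le hp₁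
            (abs_le.2 ⟨ht.1.le, ht.2⟩) N hx).trans_eq (by ring))
          ((by fun_prop : Continuous _).intervalIntegrable _ _)
    _ ≤ (1 - p) * ((0).factorial / a ^ (0 + 1)) + C * ((1).factorial / a ^ (1 + 1)) := by
        rw [intervalIntegral.integral_add ((by fun_prop : Continuous _).intervalIntegrable _ _)
          ((by fun_prop : Continuous _).intervalIntegrable _ _),
          intervalIntegral.integral_const_mul, intervalIntegral.integral_const_mul]
        gcongr
        · linarith
        · exact intervalIntegral_abs_pow_mul_exp_neg_mul_sq_le ha₀ 0 pi_pos.le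
        · exact intervalIntegral_abs_pow_mul_exp_neg_mul_sq_le ha₀ 1 pi_pos.le
    _ = _ := by simp [div_eq_mul_inv]

lemma abs_two_pi_mul_binomMass_sub_le {x : ℝ} (hp₀ : 0 < p) (hp₁ : p ≤ 1 / 2) {N : ℕ}
    (hN : 0 < N) {j : ℕ} (hx : x ∈ Set.Icc (j : ℝ) (j + 1)) :
    |2 * π * binomMass N p j -
        2 * π * (φ (binomStd (N + 1) p x) / √(binomVar (N + 1) p))| ≤
      (1 - p) / (2 * binomVar N p / π ^ 2) +
        binomVar (N + 1) p * bernoulliErrorConst p / (2 * binomVar N p / π ^ 2) ^ 2 +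
        2 * (exp (-(binomVar (N + 1) p / 2) * π ^ 2) / (binomVar (N + 1) p / 2 * π)) := by
  have hV : 0 < binomVar (N + 1) p := binomVar_pos hp₀ (by linarith) N.succ_pos
  have hfourier := norm_intervalIntegral_exp_mul_sub_le hp₀ hp₁ hN hx
  have htail := norm_integral_sub_intervalIntegral_le
    (f := fun t => Complex.exp ((-(x - (N + 1 : ℕ) * p) * t : ℝ) * Complex.I) *
      (exp (-(binomVar (N + 1) p / 2) * t ^ 2) : ℝ))
    (by fun_prop : Continuous _).aestronglyMeasurable (half_pos hV) pi_pos fun t => by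
      rw [norm_mul, Complex.norm_exp_ofReal_mul_I, one_mul, Complex.norm_of_nonneg (exp_pos _).le]
  rw [integral_exp_mul_I_mul_exp_neg_mul_sq hV, norm_sub_rev] at htail
  rw [integral_exp_mul_bernoulliCharFun_pow] at hfourier
  have htotal := norm_add_le_of_le hfourier htail
  rwa [sub_add_sub_cancel, ← Complex.ofReal_sub, Complex.norm_real] at htotal

lemma abs_binomVar_mul_binomMass_sub_le {x : ℝ} (hp₀ : 0 < p) (hp₁ : p ≤ 1 / 2) {N : ℕ}
    (hN : 0 < N) {j : ℕ} (hx : x ∈ Set.Icc (j : ℝ) (j + 1)) :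
    |binomVar (N + 1) p * binomMass N p j -
        √(binomVar (N + 1) p) * φ (binomStd (N + 1) p x)| ≤
      (N + 1) / N * (1 - p) * (π / 4) +
        ((N + 1) / N) ^ 2 * bernoulliErrorConst p * (π ^ 3 / 8) +
        2 / π ^ 2 * exp (-(binomVar (N + 1) p / 2) * π ^ 2) := by
  have hV : 0 < binomVar (N + 1) p := binomVar_pos hp₀ (by linarith) N.succ_pos
  have hbound := abs_two_pi_mul_binomMass_sub_le hp₀ hp₁ hN hx
  set V := binomVar (N + 1) p with hVdef
  set z := binomStd (N + 1) p x
  have hscale : 0 < V / (2 * π) := by positivity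
  calc _ = |V / (2 * π) * (2 * π * binomMass N p j - 2 * π * (φ z / √V))| := by
        congr 1
        field_simp
        linear_combination -φ z * sq_sqrt hV.le
    _ = V / (2 * π) * |2 * π * binomMass N p j - 2 * π * (φ z / √V)| := by
        rw [abs_mul, abs_of_pos hscale]
    _ ≤ _ := mul_le_mul_of_nonneg_left hbound hscale.le
    _ = _ := by
        have hq : 0 < 1 - p := by linarith
        rw [mul_add, mul_add]
        congr 1
        · congr 1
          all_goals
            rw [hVdef, binomVar, binomVar]
            push_cast
            field_simp
            norm_num
          ring
        · field_simp

lemma local_limit_error_le {N : ℝ} (hp₀ : 0 ≤ p) (hp₁ : p ≤ 1 / 2) (hN : 8 ≤ N) {E : ℝ}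
    (hE : p * E ≤ 0.02) :
    p * ((N + 1) / N * (1 - p) * (π / 4) +
      ((N + 1) / N) ^ 2 * bernoulliErrorConst p * (π ^ 3 / 8) + E) ≤ 0.516 := by
  have hq : 0 ≤ 1 - p := by linarith
  have hv : 0 ≤ 1 - p * (1 - p) := by linarith [mul_one_sub_le_quarter p]
  have hratio : (N + 1) / N ≤ 9 / 8 := by
    rw [div_le_div_iff₀ (by linarith) (by norm_num)]
    linarith
  have hconst : bernoulliErrorConst p ≤ (1 - 2 * p) / 6 + 3.1416 * (1 - p * (1 - p)) / 24 := by
    rw [bernoulliErrorConst, abs_of_nonneg (by linarith)]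
    gcongr
    exact pi_lt_d4.le
  have hconst₀ := bernoulliErrorConst_nonneg p
  have hconst₀' := hconst₀.trans hconst
  calc _ ≤ p * (9 / 8 * (1 - p) * (3.1416 / 4) + (9 / 8) ^ 2 *
        ((1 - 2 * p) / 6 + 3.1416 * (1 - p * (1 - p)) / 24) * (3.1416 ^ 3 / 8)) + p * E := by
        rw [mul_add p _ E]
        gcongr
        · exact pi_lt_d4.le
        · exact pi_lt_d4.le
    _ ≤ 0.516 := by
        nlinarith [sq_nonneg (p - 0.41), mul_nonneg (sq_nonneg p) (sub_nonneg.2 hp₁)]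

lemma mul_exp_neg_binomVar_le (hp₀ : 0 < p) (hp₁ : p ≤ 1 / 2) {N : ℕ} (hN : 8 ≤ N) :
    p * (2 / π ^ 2 * exp (-(binomVar (N + 1) p / 2) * π ^ 2)) ≤ 0.02 := by
  have hN' : (8 : ℝ) ≤ N := by exact_mod_cast hN
  have hq : 0 < 1 - p := by linarith
  have hV : 0 < binomVar (N + 1) p := binomVar_pos hp₀ (by linarith) N.succ_pos
  have hz : 0 < binomVar (N + 1) p / 2 * π ^ 2 := by positivity
  have hexp : exp (-(binomVar (N + 1) p / 2) * π ^ 2) ≤ (binomVar (N + 1) p / 2 * π ^ 2)⁻¹ := by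
    rw [neg_mul, exp_neg]
    exact inv_anti₀ hz (by linarith [add_one_le_exp (binomVar (N + 1) p / 2 * π ^ 2)])
  calc p * (2 / π ^ 2 * exp (-(binomVar (N + 1) p / 2) * π ^ 2))
      ≤ p * (2 / π ^ 2 * (binomVar (N + 1) p / 2 * π ^ 2)⁻¹) := by gcongr
    _ = 4 / ((N + 1) * (1 - p) * π ^ 4) := by
        rw [binomVar]
        push_cast
        field_simp
        norm_num
    _ ≤ 4 / ((8 + 1) * (1 - 1 / 2) * 3 ^ 4) := by
        gcongr
        exact pi_gt_three.le
    _ ≤ 0.02 := by norm_num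

lemma binomVar_mul_binomMass_le (hp₀ : 0 < p) (hp₁ : p ≤ 1 / 2) {N : ℕ} (hN : N < 8) (j : ℕ) :
    binomVar (N + 1) p * binomMass N p j ≤ 0.516 / p := by
  have hv : p * (1 - p) ≤ 1 / 4 := mul_one_sub_le_quarter p
  have hv₀ : 0 ≤ p * (1 - p) := mul_nonneg hp₀.le (by linarith)
  have hmass₀ := binomMass_nonneg hp₀.le (by linarith) N j
  rw [le_div_iff₀ hp₀]
  rcases N.eq_zero_or_pos with rfl | hpos
  · calc binomVar 1 p * binomMass 0 p j * p
        ≤ 1 / 4 * 1 * (1 / 2) := by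
          gcongr
          · simpa [binomVar] using hv
          · exact binomMass_le_one hp₀.le (by linarith) 0 j
      _ ≤ 0.516 := by norm_num
  · obtain ⟨N, rfl⟩ := Nat.exists_eq_succ_of_ne_zero hpos.ne'
    have hN' : ((N + 1 + 1 : ℕ) : ℝ) ≤ 8 := by exact_mod_cast hN
    calc binomVar (N + 1 + 1) p * binomMass (N + 1) p j * p
        ≤ 8 * p * (1 - p) * (1 - p) * p := by
          have hq : 0 ≤ 1 - p := by linarith
          unfold binomVar
          gcongr
          exact binomMass_succ_le hp₀.le hp₁ N j
      _ = 8 * (p * (1 - p)) * (p * (1 - p)) := by ring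
      _ ≤ 8 * (1 / 4) * (1 / 4) := by gcongr
      _ ≤ 0.516 := by norm_num

lemma sqrt_binomVar_mul_gaussianPDFReal_le (hp₀ : 0 < p) (hp₁ : p ≤ 1 / 2) {n : ℕ} (hn : n ≤ 8)
    (z : ℝ) : √(binomVar n p) * φ z ≤ 0.516 / p := by
  have hn' : (n : ℝ) ≤ 8 := by exact_mod_cast hn
  have hv₀ : 0 ≤ p * (1 - p) := mul_nonneg hp₀.le (by linarith)
  have hsqrt : √(binomVar n p) ≤ 1.5 := by
    refine sqrt_le_iff.2 ⟨by norm_num, ?_⟩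
    calc binomVar n p = n * (p * (1 - p)) := mul_assoc _ _ _
      _ ≤ 8 * (1 / 4) := by
        gcongr
        exact mul_one_sub_le_quarter p
      _ ≤ 1.5 ^ 2 := by norm_num
  calc √(binomVar n p) * φ z ≤ 1.5 * 0.399 := by
        gcongr
        · exact gaussianPDFReal_nonneg 0 1 z
        · exact gaussianPDFReal_zero_one_le z
    _ ≤ 0.516 / (1 / 2) := by norm_num
    _ ≤ 0.516 / p := by gcongr

theorem binomial_local_limit {x : ℝ} (hp₀ : 0 < p) (hp₁ : p ≤ 1 / 2) (N : ℕ) {j : ℕ}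
    (hx : x ∈ Set.Icc (j : ℝ) (j + 1)) :
    |binomVar (N + 1) p * binomMass N p j -
        √(binomVar (N + 1) p) * φ (binomStd (N + 1) p x)| ≤ 0.516 / p := by
  -- For small `N` the Fourier estimate can exceed `0.516 / p`,
  -- but each of the two terms is below it.
  rcases le_or_gt 8 N with hN | hN
  · refine (abs_binomVar_mul_binomMass_sub_le hp₀ hp₁ (by lia) hx).trans ?_
    rw [le_div_iff₀' hp₀]
    exact local_limit_error_le hp₀.le hp₁ (by exact_mod_cast hN)
      (mul_exp_neg_binomVar_le hp₀ hp₁ hN)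
  · refine abs_sub_le_of_nonneg_of_le ?_ (binomVar_mul_binomMass_le hp₀ hp₁ hN j) ?_
      (sqrt_binomVar_mul_gaussianPDFReal_le hp₀ hp₁ hN _)
    · exact mul_nonneg (binomVar_nonneg hp₀.le (by linarith) _)
        (binomMass_nonneg hp₀.le (by linarith) N j)
    · exact mul_nonneg (sqrt_nonneg _) (gaussianPDFReal_nonneg 0 1 _)

end LocalLimitTheorem

section NormalDistribution

lemma Phi_eq_measureReal (x : ℝ) : Phi x = (gaussianReal 0 1).real (Set.Iio x) := by
  rw [measureReal_def, gaussianReal_apply_eq_integral 0 one_ne_zero,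
    ENNReal.toReal_ofReal (integral_nonneg (gaussianPDFReal_nonneg 0 1))]
  simp_rw [gaussianPDFReal_zero_one, integral_const_mul]
  rfl

lemma Phi_nonneg (x : ℝ) : 0 ≤ Phi x := by
  rw [Phi_eq_measureReal]
  exact measureReal_nonneg

lemma Phi_neg (x : ℝ) : Phi (-x) = 1 - Phi x := by
  have := nullSingletonClass_gaussianReal (μ := 0) (v := 1) one_ne_zero
  have hsymm : (gaussianReal 0 1).map (fun x => -x) = gaussianReal 0 1 := by
    rw [gaussianReal_map_neg, neg_zero]
  calc Phi (-x) = ((gaussianReal 0 1).map (fun x => -x)).real (Set.Iio (-x)) := by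
        rw [hsymm, Phi_eq_measureReal]
    _ = (gaussianReal 0 1).real (Set.Ioi x) := by
        rw [map_measureReal_apply measurable_neg measurableSet_Iio]
        simp
    _ = (gaussianReal 0 1).real (Set.Iio x)ᶜ := by
        rw [Set.compl_Iio]
        exact measureReal_congr Ioi_ae_eq_Ici
    _ = 1 - Phi x := by rw [probReal_compl_eq_one_sub measurableSet_Iio, Phi_eq_measureReal]

lemma Phi_zero : Phi 0 = 1 / 2 := by
  have h := Phi_neg 0
  rw [neg_zero] at h
  linarith

lemma Phi_le_half {x : ℝ} (hx : x ≤ 0) : Phi x ≤ 1 / 2 := by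
  rw [← Phi_zero, Phi_eq_measureReal, Phi_eq_measureReal]
  exact measureReal_mono (Set.Iio_subset_Iio hx)

lemma hasDerivAt_Phi (x : ℝ) : HasDerivAt Phi (φ x) x := by
  have hcont : Continuous fun t => φ t := by
    simp_rw [gaussianPDFReal_zero_one]
    fun_prop
  have hint := integrable_gaussianPDFReal 0 1
  have heq : Phi = fun x => (∫ t in Set.Iic 0, φ t) + ∫ t in (0 : ℝ)..x, φ t := by
    funext x
    rw [← intervalIntegral.integral_Iic_sub_Iic hint.integrableOn hint.integrableOn,
      add_sub_cancel, integral_Iic_eq_integral_Iio]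
    simp_rw [gaussianPDFReal_zero_one, integral_const_mul]
    rfl
  rw [heq]
  exact (hcont.integral_hasStrictDerivAt 0 x).hasDerivAt.const_add _

lemma abs_Phi_sub_half_le (x : ℝ) : |Phi x - 1 / 2| ≤ 0.399 * |x| := by
  have h := convex_univ.norm_image_sub_le_of_norm_hasDerivWithin_le
    (fun t _ => (hasDerivAt_Phi t).hasDerivWithinAt)
    (fun t _ => (norm_of_nonneg (gaussianPDFReal_nonneg 0 1 t)).trans_le
      (gaussianPDFReal_zero_one_le t)) (Set.mem_univ 0) (Set.mem_univ x)
  simpa [Phi_zero] using h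

lemma one_div_one_add_sq_sub_Phi_le {x : ℝ} (hx : x ≤ 0) : 1 / (1 + x ^ 2) - Phi x ≤ 0.542 := by
  rcases le_or_gt (-1) x with h | h
  · have hlinear : 1 / (1 + x ^ 2) ≤ 1.042 + 0.399 * x := by
      rw [div_le_iff₀ (by positivity)]
      nlinarith [mul_nonneg (by linarith : 0 ≤ 0.8664 + 0.399 * x) (sq_nonneg (x + 0.22))]
    have hPhi := abs_Phi_sub_half_le x
    rw [abs_of_nonpos hx] at hPhi
    linarith [(abs_le.1 hPhi).1]
  · calc 1 / (1 + x ^ 2) - Phi x ≤ 1 / (1 + 1) - 0 := by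
          gcongr
          · nlinarith
          · exact Phi_nonneg x
      _ ≤ 0.542 := by norm_num

end NormalDistribution

section KolmogorovDistance

variable {p : ℝ}

lemma cantelli_sum_le {ι : Type*} {s t : Finset ι} (hts : t ⊆ s) {μ f : ι → ℝ} {V y : ℝ}
    (hμ : ∀ i ∈ s, 0 ≤ μ i) (hmass : ∑ i ∈ s, μ i = 1) (hmean : ∑ i ∈ s, f i * μ i = 0)
    (hvar : ∑ i ∈ s, f i ^ 2 * μ i = V) (hV : 0 < V) (hy : 0 ≤ y) (hyf : ∀ i ∈ t, y ≤ f i) :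
    ∑ i ∈ t, μ i ≤ V / (V + y ^ 2) := by
  have hV₁ : 0 < V + y ^ 2 := by positivity
  -- Markov's inequality for `(V + y f)²`; this shift of `f` gives the optimal constant.
  have hsq : (V + y ^ 2) ^ 2 * ∑ i ∈ t, μ i ≤ V * (V + y ^ 2) := by
    calc (V + y ^ 2) ^ 2 * ∑ i ∈ t, μ i = ∑ i ∈ t, (V + y * y) ^ 2 * μ i := by
          rw [Finset.mul_sum, sq y]
      _ ≤ ∑ i ∈ t, (V + y * f i) ^ 2 * μ i := by
        gcongr with i hi
        · exact hμ i (hts hi)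
        · exact hyf i hi
      _ ≤ ∑ i ∈ s, (V + y * f i) ^ 2 * μ i :=
        Finset.sum_le_sum_of_subset_of_nonneg hts fun i hi _ =>
          mul_nonneg (sq_nonneg _) (hμ i hi)
      _ = V ^ 2 * ∑ i ∈ s, μ i + 2 * V * y * ∑ i ∈ s, f i * μ i +
          y ^ 2 * ∑ i ∈ s, f i ^ 2 * μ i := by
        simp_rw [Finset.mul_sum, ← Finset.sum_add_distrib]
        exact Finset.sum_congr rfl fun i _ => by ring
      _ = V * (V + y ^ 2) := by
        rw [hmass, hmean, hvar]
        ring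
  rw [le_div_iff₀ hV₁]
  exact le_of_mul_le_mul_left (by linarith) hV₁

lemma sum_binomStd_mul_binomMass (n : ℕ) (p : ℝ) :
    ∑ i ∈ Finset.range (n + 1), binomStd n p i * binomMass n p i = 0 := by
  have hmean := congrArg (Polynomial.eval p) (bernsteinPolynomial.sum_smul ℝ n)
  simp only [nsmul_eq_mul, Polynomial.eval_finsetSum, Polynomial.eval_mul,
    Polynomial.eval_natCast, ← binomMass_eq_eval, Polynomial.eval_X] at hmean
  simp_rw [binomStd, div_mul_eq_mul_div, ← Finset.sum_div, sub_mul, Finset.sum_sub_distrib,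
    ← Finset.mul_sum, sum_range_binomMass, hmean]
  simp

lemma sum_binomStd_sq_mul_binomMass {n : ℕ} (hV : 0 < binomVar n p) :
    ∑ i ∈ Finset.range (n + 1), binomStd n p i ^ 2 * binomMass n p i = 1 := by
  have hvar := congrArg (Polynomial.eval p) (bernsteinPolynomial.variance ℝ n)
  simp only [Polynomial.eval_finsetSum, Polynomial.eval_mul, Polynomial.eval_pow,
    Polynomial.eval_sub, ← binomMass_eq_eval, nsmul_eq_mul, Polynomial.eval_X,
    Polynomial.eval_natCast, Polynomial.eval_one] at hvar
  simp_rw [binomStd, div_pow, sq_sqrt hV.le, div_mul_eq_mul_div, ← Finset.sum_div]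
  rw [div_eq_one_iff_eq hV.ne', binomVar, ← hvar]
  exact Finset.sum_congr rfl fun i _ => by ring

lemma binomStd_mono (n : ℕ) (p : ℝ) : Monotone (binomStd n p) := fun x y hxy => by
  unfold binomStd
  gcongr

lemma binomCDF_eq_sum_filter (n : ℕ) (p x : ℝ) :
    binomCDF n p x =
      ∑ i ∈ (Finset.range (n + 1)).filter (fun i : ℕ => (i : ℝ) < x), binomMass n p i :=
  (Finset.sum_filter _ _).symm

lemma binomCDF_nonneg (hp₀ : 0 ≤ p) (hp₁ : p ≤ 1) (n : ℕ) (x : ℝ) : 0 ≤ binomCDF n p x := by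
  rw [binomCDF_eq_sum_filter]
  exact Finset.sum_nonneg fun i _ => binomMass_nonneg hp₀ hp₁ n i

lemma binomCDF_le_one (hp₀ : 0 ≤ p) (hp₁ : p ≤ 1) (n : ℕ) (x : ℝ) : binomCDF n p x ≤ 1 := by
  rw [binomCDF_eq_sum_filter]
  exact sum_binomMass_le_one hp₀ hp₁ n _

lemma binomCDF_le_of_binomStd_nonpos (hp₀ : 0 < p) (hp₁ : p < 1) {n m : ℕ} (hn : 0 < n) {x : ℝ}
    (hmx : (m : ℝ) - 1 ≤ x) (hz : binomStd n p x ≤ 0) :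
    binomCDF n p m ≤ 1 / (1 + binomStd n p x ^ 2) := by
  rw [binomCDF_eq_sum_filter, ← neg_sq]
  refine cantelli_sum_le (Finset.filter_subset _ _) (f := fun i : ℕ => -binomStd n p i)
    (fun i _ => binomMass_nonneg hp₀.le hp₁.le n i) (sum_range_binomMass n p) ?_ ?_ one_pos
    (neg_nonneg.2 hz) fun i hi => neg_le_neg (binomStd_mono n p ?_)
  · simp_rw [neg_mul, Finset.sum_neg_distrib, sum_binomStd_mul_binomMass, neg_zero]
  · simp_rw [neg_sq, sum_binomStd_sq_mul_binomMass (binomVar_pos hp₀ hp₁ hn)]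
  · have him : (i : ℝ) + 1 ≤ m := by exact_mod_cast (Finset.mem_filter.1 hi).2
    linarith

lemma one_sub_le_binomCDF_of_binomStd_nonneg (hp₀ : 0 < p) (hp₁ : p < 1) {n : ℕ} (hn : 0 < n)
    {x y : ℝ} (hxy : x ≤ y) (hz : 0 ≤ binomStd n p x) :
    1 - 1 / (1 + binomStd n p x ^ 2) ≤ binomCDF n p y := by
  have htail : ∑ i ∈ (Finset.range (n + 1)).filter (fun i : ℕ => ¬(i : ℝ) < y), binomMass n p i ≤
      1 / (1 + binomStd n p x ^ 2) :=
    cantelli_sum_le (Finset.filter_subset _ _)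
      (fun i _ => binomMass_nonneg hp₀.le hp₁.le n i) (sum_range_binomMass n p)
      (sum_binomStd_mul_binomMass n p)
      (sum_binomStd_sq_mul_binomMass (binomVar_pos hp₀ hp₁ hn)) one_pos hz
      fun i hi => binomStd_mono n p (hxy.trans (not_lt.1 (Finset.mem_filter.1 hi).2))
  have hsplit := Finset.sum_filter_add_sum_filter_not (Finset.range (n + 1))
    (fun i : ℕ => (i : ℝ) < y) (binomMass n p)
  rw [sum_range_binomMass, ← binomCDF_eq_sum_filter] at hsplit
  linarith

lemma abs_binomCDF_sub_Gnp_le (hp₀ : 0 < p) (hp₁ : p < 1) {n m : ℕ} (hn : 0 < n) {x : ℝ}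
    (hx : x ∈ Set.Icc ((m : ℝ) - 1) m) : |binomCDF n p m - Gnp n p x| ≤ 0.542 := by
  change |binomCDF n p m - Phi (binomStd n p x)| ≤ 0.542
  have hF₀ := binomCDF_nonneg hp₀.le hp₁.le n m
  have hF₁ := binomCDF_le_one hp₀.le hp₁.le n m
  rw [abs_le]
  rcases le_total (binomStd n p x) 0 with hz | hz
  · have hF := binomCDF_le_of_binomStd_nonpos hp₀ hp₁ hn hx.1 hz
    have hPhi := one_div_one_add_sq_sub_Phi_le hz
    have hhalf := Phi_le_half hz
    constructor <;> linarith
  · have hF := one_sub_le_binomCDF_of_binomStd_nonneg hp₀ hp₁ hn hx.2 hz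
    have hPhi := one_div_one_add_sq_sub_Phi_le (neg_nonpos.2 hz)
    have hhalf := Phi_le_half (neg_nonpos.2 hz)
    rw [Phi_neg] at hPhi hhalf
    rw [neg_sq] at hPhi
    constructor <;> linarith

end KolmogorovDistance

section DerivativeInParameter

variable {p : ℝ}

lemma hasDerivAt_sum_binomMass (N m : ℕ) (p : ℝ) :
    HasDerivAt (fun p => ∑ i ∈ Finset.range (m + 1), binomMass (N + 1) p i)
      (-((N + 1) * binomMass N p m)) p := by
  have htelescope : Polynomial.derivative
      (∑ i ∈ Finset.range (m + 1), bernsteinPolynomial ℝ (N + 1) i) =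
        -((N + 1 : ℕ) * bernsteinPolynomial ℝ N m) := by
    induction m with
    | zero =>
      rw [Finset.sum_range_one, bernsteinPolynomial.derivative_zero, Nat.add_sub_cancel, neg_mul]
    | succ m ih =>
      rw [Finset.sum_range_succ, Polynomial.derivative_add, ih,
        bernsteinPolynomial.derivative_succ, Nat.add_sub_cancel]
      ring
  simp_rw [binomMass_eq_eval, ← Polynomial.eval_finsetSum]
  refine (Polynomial.hasDerivAt _ p).congr_deriv ?_
  rw [htelescope]
  simp

lemma binomCDF_natCast (n m : ℕ) (p : ℝ) :
    binomCDF n p m = ∑ i ∈ Finset.range m, binomMass n p i := by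
  rw [binomCDF_eq_sum_filter]
  refine Finset.sum_subset (fun i hi => ?_) fun i him hi => binomMass_eq_zero ?_ p
  · simpa using (Finset.mem_filter.1 hi).2
  · by_contra! hin
    exact hi (Finset.mem_filter.2
      ⟨Finset.mem_range_succ_iff.2 hin, Nat.cast_lt.2 (Finset.mem_range.1 him)⟩)

lemma sqrt_binomVar_mul_gaussianPDFReal_le_of_nonpos (hp₀ : 0 < p) (hp₁ : p < 1) {n : ℕ}
    (hn : 0 < n) {x : ℝ} (hx : x ≤ 0) :
    √(binomVar n p) * φ (binomStd n p x) ≤ 0.242 := by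
  have hV : 0 < binomVar n p := binomVar_pos hp₀ hp₁ hn
  have hsqrt : √(binomVar n p) ≤ |binomStd n p x| := by
    rw [binomStd, abs_div, abs_of_nonneg (sqrt_nonneg _), le_div_iff₀ (sqrt_pos.2 hV),
      mul_self_sqrt hV.le, abs_of_nonpos (by nlinarith [Nat.cast_nonneg (α := ℝ) n]), binomVar]
    nlinarith [mul_nonneg (Nat.cast_nonneg (α := ℝ) n) (sq_nonneg p)]
  calc √(binomVar n p) * φ (binomStd n p x) ≤ |binomStd n p x| * φ (binomStd n p x) :=
        mul_le_mul_of_nonneg_right hsqrt (gaussianPDFReal_nonneg 0 1 _)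
    _ ≤ 0.242 := abs_mul_gaussianPDFReal_zero_one_le _

lemma exists_hasDerivAt_binomCDF (hp₀ : 0 < p) (hp₁ : p ≤ 1 / 2) {n m : ℕ} (hn : 0 < n) {x : ℝ}
    (hx : x ∈ Set.Icc ((m : ℝ) - 1) m) :
    ∃ d, HasDerivAt (fun p => binomCDF n p m) d p ∧
      |p * (1 - p) * d + √(binomVar n p) * φ (binomStd n p x)| ≤ 0.516 / p := by
  simp_rw [binomCDF_natCast]
  cases m with
  | zero =>
    refine ⟨0, by simpa using hasDerivAt_const p (0 : ℝ), ?_⟩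
    have hx₀ : x ≤ 0 := by simpa using hx.2
    have hpdf := sqrt_binomVar_mul_gaussianPDFReal_le_of_nonpos hp₀ (by linarith) hn hx₀
    rw [mul_zero, zero_add, abs_of_nonneg (mul_nonneg (sqrt_nonneg _)
      (gaussianPDFReal_nonneg 0 1 _)), le_div_iff₀ hp₀]
    nlinarith
  | succ j =>
    obtain ⟨N, rfl⟩ := Nat.exists_eq_succ_of_ne_zero hn.ne'
    refine ⟨_, hasDerivAt_sum_binomMass N j p, ?_⟩
    have hlocal := binomial_local_limit hp₀ hp₁ N (j := j) (x := x) (by simpa using hx)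
    rw [abs_sub_comm] at hlocal
    convert! hlocal using 2
    rw [binomVar]
    push_cast
    ring

lemma hasDerivAt_Gnp (hp₀ : 0 < p) (hp₁ : p < 1) {n : ℕ} (hn : 0 < n) (x : ℝ) :
    HasDerivAt (fun p => Gnp n p x)
      (-(φ (binomStd n p x) * (√(binomVar n p) + binomStd n p x * ((1 - 2 * p) / 2)) /
        (p * (1 - p)))) p := by
  have hq : 0 < 1 - p := by linarith
  have hV : 0 < binomVar n p := binomVar_pos hp₀ hp₁ hn
  have hs : 0 < √(binomVar n p) := sqrt_pos.2 hV
  have hmean : HasDerivAt (fun p : ℝ => x - n * p) (-n) p := by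
    simpa using ((hasDerivAt_id' p).const_mul (n : ℝ)).const_sub x
  have hvar : HasDerivAt (fun p : ℝ => n * p * (1 - p)) (n * (1 - 2 * p)) p :=
    (((hasDerivAt_id' p).const_mul (n : ℝ)).mul ((hasDerivAt_id' p).const_sub 1)).congr_deriv
      (by ring)
  refine ((hasDerivAt_Phi _).comp p (hmean.div (hvar.sqrt hV.ne') hs.ne')).congr_deriv ?_
  change φ (binomStd n p x) * ((-n * √(binomVar n p) -
    (x - n * p) * (n * (1 - 2 * p) / (2 * √(binomVar n p)))) / √(binomVar n p) ^ 2) = _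
  have hx : x - n * p = binomStd n p x * √(binomVar n p) := (div_mul_cancel₀ _ hs.ne').symm
  rw [hx, sq_sqrt hV.le, binomVar]
  rw [binomVar] at hs
  field_simp
  ring

lemma exists_hasDerivAt_binomCDF_sub_Gnp (hp₀ : 0 < p) (hp₁ : p ≤ 1 / 2) {n m : ℕ} (hn : 0 < n)
    {x : ℝ} (hx : x ∈ Set.Icc ((m : ℝ) - 1) m) :
    ∃ d, HasDerivAt (fun p => binomCDF n p m - Gnp n p x) d p ∧
      p * (1 - p) * |d| ≤ 0.516 / p + 0.121 := by
  have hv : 0 < p * (1 - p) := mul_pos hp₀ (by linarith)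
  obtain ⟨d, hd, hdle⟩ := exists_hasDerivAt_binomCDF hp₀ hp₁ hn hx
  refine ⟨_, hd.sub (hasDerivAt_Gnp hp₀ (by linarith) hn x), ?_⟩
  set z := binomStd n p x
  calc _ = |(p * (1 - p) * d + √(binomVar n p) * φ z) + (1 - 2 * p) / 2 * (z * φ z)| := by
        rw [← abs_of_pos hv, ← abs_mul, abs_of_pos hv, mul_sub, mul_neg, mul_div_cancel₀ _ hv.ne']
        ring_nf
    _ ≤ |p * (1 - p) * d + √(binomVar n p) * φ z| + |(1 - 2 * p) / 2 * (z * φ z)| :=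
        abs_add_le _ _
    _ = |p * (1 - p) * d + √(binomVar n p) * φ z| + (1 - 2 * p) / 2 * (|z| * φ z) := by
        rw [abs_mul, abs_mul, abs_of_nonneg (gaussianPDFReal_nonneg 0 1 z),
          abs_of_nonneg (show 0 ≤ (1 - 2 * p) / 2 by linarith)]
    _ ≤ 0.516 / p + 1 / 2 * 0.242 := by
        gcongr
        · exact mul_nonneg (abs_nonneg z) (gaussianPDFReal_nonneg 0 1 z)
        · linarith
        · exact abs_mul_gaussianPDFReal_zero_one_le z
    _ = 0.516 / p + 0.121 := by norm_num

end DerivativeInParameter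

section InterpolationConstant

variable {p : ℝ}

lemma one_sub_two_mul_mul_one_sub_pos (p : ℝ) : 0 < 1 - 2 * p * (1 - p) := by
  linarith [mul_one_sub_le_quarter p]

lemma rho_pos (hp₀ : 0 < p) (hp₁ : p < 1) : 0 < rho p := by
  have : 0 < 1 - p := by linarith
  unfold rho
  positivity

lemma inv_rho (p : ℝ) : (rho p)⁻¹ = √(p * (1 - p)) / (1 - 2 * p * (1 - p)) := by
  rw [rho, inv_div]
  ring_nf

lemma hasDerivAt_one_sub_two_mul_mul_one_sub (p : ℝ) :
    HasDerivAt (fun p : ℝ => 1 - 2 * p * (1 - p)) (-2 * (1 - 2 * p)) p :=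
  ((((hasDerivAt_id' p).const_mul 2).mul ((hasDerivAt_id' p).const_sub 1)).const_sub 1).congr_deriv
    (by ring)

lemma hasDerivAt_inv_rho (hp₀ : 0 < p) (hp₁ : p < 1) :
    HasDerivAt (fun p => (rho p)⁻¹)
      ((1 - 2 * p) * (1 + 2 * p * (1 - p)) /
        (2 * √(p * (1 - p)) * (1 - 2 * p * (1 - p)) ^ 2)) p := by
  have hv : 0 < p * (1 - p) := mul_pos hp₀ (by linarith)
  have hs : 0 < √(p * (1 - p)) := sqrt_pos.2 hv
  have hw := one_sub_two_mul_mul_one_sub_pos p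
  have hvar : HasDerivAt (fun p : ℝ => p * (1 - p)) (1 - 2 * p) p :=
    ((hasDerivAt_id' p).mul ((hasDerivAt_id' p).const_sub 1)).congr_deriv (by ring)
  simp_rw [inv_rho]
  refine ((hvar.sqrt hv.ne').div (hasDerivAt_one_sub_two_mul_mul_one_sub p) hw.ne').congr_deriv ?_
  have hsq : √(p * (1 - p)) ^ 2 = p * (1 - p) := sq_sqrt hv.le
  generalize √(p * (1 - p)) = s at *
  field_simp
  rw [hsq]
  ring

/-- The product `√(pq) L(p)`, which is a rational function of `p`. -/
noncomputable def sqrtMulL (p : ℝ) : ℝ :=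
  (0.516 / p + 0.121 +
    0.271 * ((1 - 2 * p) * (1 + 2 * p * (1 - p)) / (1 - 2 * p * (1 - p)))) /
      (1 - 2 * p * (1 - p))

lemma L_eq_inv_sqrt_mul (p : ℝ) : L p = (√(p * (1 - p)))⁻¹ * sqrtMulL p := by
  rw [L, sqrtMulL, one_div_mul_eq_div, inv_mul_eq_div, div_div]

lemma sqrtMulL_nonneg (hp₀ : 0 ≤ p) (hp₁ : p ≤ 1 / 2) : 0 ≤ sqrtMulL p := by
  have hw := one_sub_two_mul_mul_one_sub_pos p
  have hq : 0 ≤ 1 - p := by linarith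
  have hskew : 0 ≤ 1 - 2 * p := by linarith
  unfold sqrtMulL
  positivity

lemma L_nonneg (hp₀ : 0 ≤ p) (hp₁ : p ≤ 1 / 2) : 0 ≤ L p := by
  rw [L_eq_inv_sqrt_mul]
  exact mul_nonneg (by positivity) (sqrtMulL_nonneg hp₀ hp₁)

lemma hasDerivAt_sqrtMulL (hp : p ≠ 0) :
    HasDerivAt sqrtMulL
      (-((0.516 * (1 - 4 * p + 6 * p ^ 2) - 0.242 * p ^ 2 * (1 - 2 * p)) * (1 - 2 * p * (1 - p)) -
        0.271 * p ^ 2 * (4 - 20 * (p * (1 - p)) - 8 * (p * (1 - p)) ^ 2)) /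
        (p ^ 2 * (1 - 2 * p * (1 - p)) ^ 3)) p := by
  have hw := (one_sub_two_mul_mul_one_sub_pos p).ne'
  have hw' := hasDerivAt_one_sub_two_mul_mul_one_sub p
  have hc₁ := (hasDerivAt_const p (0.516 : ℝ)).div (hasDerivAt_id' p) hp
  have hnum : HasDerivAt (fun p : ℝ => (1 - 2 * p) * (1 + 2 * p * (1 - p)))
      (-2 * (1 + 2 * p * (1 - p)) + (1 - 2 * p) * (2 * (1 - 2 * p))) p :=
    ((((hasDerivAt_id' p).const_mul 2).const_sub 1).mul ((((hasDerivAt_id' p).const_mul 2).fun_mul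
      ((hasDerivAt_id' p).const_sub 1)).const_add 1)).congr_deriv (by ring)
  refine (((hc₁.add_const 0.121).add ((hnum.div hw' hw).const_mul 0.271)).div hw' hw).congr_deriv ?_
  simp only [Pi.add_apply, Pi.div_apply]
  generalize hW : 1 - 2 * p * (1 - p) = w at *
  field_simp
  rw [← hW]
  ring

lemma sqrtMulL_derivative_numerator_nonneg (hp₀ : 0 ≤ p) (hp₁ : p ≤ 1 / 2) :
    0 ≤ (0.516 * (1 - 4 * p + 6 * p ^ 2) - 0.242 * p ^ 2 * (1 - 2 * p)) * (1 - 2 * p * (1 - p)) -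
      0.271 * p ^ 2 * (4 - 20 * (p * (1 - p)) - 8 * (p * (1 - p)) ^ 2) := by
  have hquotient : 4 - 20 * (p * (1 - p)) - 8 * (p * (1 - p)) ^ 2 ≤
      (4 - 12 * (p * (1 - p))) * (1 - 2 * p * (1 - p)) := by
    nlinarith [sq_nonneg (p * (1 - p))]
  have hquartic : 0 ≤ 0.516 * (1 - 4 * p + 6 * p ^ 2) - 0.242 * p ^ 2 * (1 - 2 * p) -
      0.271 * p ^ 2 * (4 - 12 * (p * (1 - p))) := by
    nlinarith [sq_nonneg (1 - 3 * p), mul_nonneg (pow_nonneg hp₀ 2) (sub_nonneg.2 hp₁),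
      mul_nonneg (pow_nonneg hp₀ 3) (sub_nonneg.2 hp₁)]
  calc 0 ≤ (0.516 * (1 - 4 * p + 6 * p ^ 2) - 0.242 * p ^ 2 * (1 - 2 * p) -
        0.271 * p ^ 2 * (4 - 12 * (p * (1 - p)))) * (1 - 2 * p * (1 - p)) :=
        mul_nonneg hquartic (one_sub_two_mul_mul_one_sub_pos p).le
    _ = (0.516 * (1 - 4 * p + 6 * p ^ 2) - 0.242 * p ^ 2 * (1 - 2 * p)) * (1 - 2 * p * (1 - p)) -
        0.271 * p ^ 2 * ((4 - 12 * (p * (1 - p))) * (1 - 2 * p * (1 - p))) := by ring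
    _ ≤ _ := by gcongr

lemma antitoneOn_sqrtMulL : AntitoneOn sqrtMulL (Set.Ioc 0 (1 / 2)) := by
  refine antitoneOn_of_hasDerivWithinAt_nonpos (convex_Ioc _ _)
    (fun p hp => (hasDerivAt_sqrtMulL hp.1.ne').continuousAt.continuousWithinAt)
    (fun p hp => (hasDerivAt_sqrtMulL (interior_subset hp).1.ne').hasDerivWithinAt) fun p hp => ?_
  obtain ⟨hp₀, hp₁⟩ := interior_subset hp
  have hw := one_sub_two_mul_mul_one_sub_pos p
  exact div_nonpos_of_nonpos_of_nonneg
    (neg_nonpos.2 (sqrtMulL_derivative_numerator_nonneg hp₀.le hp₁)) (by positivity)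

lemma antitoneOn_L : AntitoneOn L (Set.Ioc 0 (1 / 2)) := by
  intro p hp r hr hpr
  have hv : 0 < p * (1 - p) := mul_pos hp.1 (by linarith [hp.2])
  have hvr : p * (1 - p) ≤ r * (1 - r) := by nlinarith [hp.2, hr.2]
  rw [L_eq_inv_sqrt_mul, L_eq_inv_sqrt_mul]
  exact mul_le_mul (inv_anti₀ (sqrt_pos.2 hv) (sqrt_le_sqrt hvr))
    (antitoneOn_sqrtMulL hp hr hpr) (sqrtMulL_nonneg hr.1.le hr.2) (by positivity)

end InterpolationConstant

section Interpolation

variable {p : ℝ} {n m : ℕ}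

lemma exists_hasDerivAt_binomCDF_sub_Gnp_div_rho (hp₀ : 0 < p) (hp₁ : p ≤ 1 / 2) (hn : 0 < n)
    {x : ℝ} (hx : x ∈ Set.Icc ((m : ℝ) - 1) m) :
    ∃ d, HasDerivAt (fun p => (binomCDF n p m - Gnp n p x) / rho p) d p ∧ |d| ≤ L p := by
  have hp₁' : p < 1 := by linarith
  have hv : 0 < p * (1 - p) := mul_pos hp₀ (by linarith)
  have hw := one_sub_two_mul_mul_one_sub_pos p
  have hskew : 0 ≤ 1 - 2 * p := by linarith
  obtain ⟨d, hd, hdle⟩ := exists_hasDerivAt_binomCDF_sub_Gnp hp₀ hp₁ hn hx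
  have hkolmogorov := abs_binomCDF_sub_Gnp_le hp₀ hp₁' hn hx
  have hinv := hasDerivAt_inv_rho hp₀ hp₁'
  set D := binomCDF n p m - Gnp n p x
  set R := (1 - 2 * p) * (1 + 2 * p * (1 - p)) /
    (2 * √(p * (1 - p)) * (1 - 2 * p * (1 - p)) ^ 2) with hR
  have hR₀ : 0 ≤ R := div_nonneg (mul_nonneg hskew (by linarith)) (by positivity)
  simp_rw [div_eq_mul_inv]
  refine ⟨_, hd.mul hinv, ?_⟩
  calc |d * (rho p)⁻¹ + D * R| ≤ |d| * (rho p)⁻¹ + |D| * R := by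
        refine (abs_add_le _ _).trans_eq ?_
        rw [abs_mul, abs_mul, abs_of_pos (inv_pos.2 (rho_pos hp₀ hp₁')), abs_of_nonneg hR₀]
    _ = p * (1 - p) * |d| / ((1 - 2 * p * (1 - p)) * √(p * (1 - p))) + |D| * R := by
        rw [inv_rho, mul_comm (1 - 2 * p * (1 - p)), ← div_div, mul_div_right_comm (p * (1 - p)),
          div_sqrt, mul_comm |d|, mul_div_right_comm]
    _ ≤ (0.516 / p + 0.121) / ((1 - 2 * p * (1 - p)) * √(p * (1 - p))) + 0.542 * R := by
        gcongr
    _ = L p := by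
        rw [L, hR]
        generalize 1 - 2 * p * (1 - p) = w at *
        field_simp
        ring

lemma abs_div_rho_sub_div_rho_le {a r : ℝ} (ha : 0 < a) (hp : p ∈ Set.Icc a (1 / 2))
    (hr : r ∈ Set.Icc a (1 / 2)) (hn : 0 < n) {x : ℝ} (hx : x ∈ Set.Icc ((m : ℝ) - 1) m) :
    |(binomCDF n p m - Gnp n p x) / rho p - (binomCDF n r m - Gnp n r x) / rho r| ≤
      |p - r| * L a := by
  have hderiv (t : ℝ) (ht : t ∈ Set.Icc a (1 / 2)) : ∃ d,
      HasDerivAt (fun p => (binomCDF n p m - Gnp n p x) / rho p) d t ∧ ‖d‖ ≤ L a := by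
    have ht₀ : 0 < t := ha.trans_le ht.1
    obtain ⟨d, hd, hdle⟩ := exists_hasDerivAt_binomCDF_sub_Gnp_div_rho ht₀ ht.2 hn hx
    exact ⟨d, hd, hdle.trans (antitoneOn_L ⟨ha, ht.1.trans ht.2⟩ ⟨ht₀, ht.2⟩ ht.1)⟩
  choose! d hd hdle using hderiv
  rw [mul_comm]
  exact (convex_Icc a (1 / 2)).norm_image_sub_le_of_norm_hasDerivWithin_le
    (fun t ht => (hd t ht).hasDerivWithinAt) hdle hr hp

lemma Deltank_div_rho (hp₀ : 0 < p) (hp₁ : p < 1) (n k : ℕ) :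
    Deltank n k p / rho p = max |(binomCDF n p k - Gnp n p k) / rho p|
      |(binomCDF n p (k + 1) - Gnp n p k) / rho p| := by
  have hrho := rho_pos hp₀ hp₁
  rw [Deltank, ← max_div_div_right hrho.le, abs_div, abs_div, abs_of_pos hrho]

theorem interpolation_bound_general {a p r : ℝ} (ha : 0 < a) (hp : p ∈ Set.Icc a (1 / 2))
    (hr : r ∈ Set.Icc a (1 / 2)) {n : ℕ} (hn : 1 ≤ n) (k : ℕ) :
    |Deltank n k p / rho p - Deltank n k r / rho r| ≤ |p - r| * L a := by
  have hhalf : (1 / 2 : ℝ) < 1 := one_half_lt_one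
  rw [Deltank_div_rho (ha.trans_le hp.1) (hp.2.trans_lt hhalf),
    Deltank_div_rho (ha.trans_le hr.1) (hr.2.trans_lt hhalf)]
  refine (abs_max_sub_max_le_max _ _ _ _).trans (max_le ?_ ?_)
  · exact (abs_abs_sub_abs_le _ _).trans
      (abs_div_rho_sub_div_rho_le ha hp hr hn ⟨sub_le_self _ zero_le_one, le_rfl⟩)
  · exact (abs_abs_sub_abs_le _ _).trans (mod_cast
      abs_div_rho_sub_div_rho_le ha hp hr hn (m := k + 1) (x := k) (by simp))

end Interpolation

/-- Interpolation theorem: if `0 < p* < p ≤ 0.5` and `p′` is a node of a grid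
with step `h` on `[p*, 0.5]` closest to `p` (so `|p − p′| ≤ h/2`), then for all
`n ≥ 1` and `0 ≤ k ≤ n`,
`|Δ_{n,k}(p)/ρ(p) − Δ_{n,k}(p′)/ρ(p′)| ≤ (h/2)·L(p*)`. -/
theorem interpolation_bound (pstar p h p' : ℝ)
    (hpstar : 0 < pstar) (hpl : pstar < p) (hpr : p ≤ 0.5)
    (hh : 0 < h) (hp' : p' ∈ Set.Icc pstar 0.5) (hclose : |p - p'| ≤ h / 2)
    (n k : ℕ) (hn : 1 ≤ n) (hk : k ≤ n) :
    |Deltank n k p / rho p - Deltank n k p' / rho p'| ≤ (h / 2) * L pstar := by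
  rw [show (0.5 : ℝ) = 1 / 2 by norm_num] at hpr hp'
  exact (interpolation_bound_general hpstar ⟨hpl.le, hpr⟩ hp' hn k).trans
    (mul_le_mul_of_nonneg_right hclose (L_nonneg hpstar.le (hpl.le.trans hpr)))
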